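/- On M = 𝕋^d × ℝ^d with ω = Σ dθ_j ∧ da_j, suppose a smooth family of symplectomorphisms φ^ε (φ^0 = id) admits two decompositions φ^ε = Φ^ε ∘ ψ^ε = Φ'^ε ∘ ψ'^ε, where Φ^ε, Φ'^ε are fiber-preserving families of symplectomorphisms (π∘Φ^ε = φ_B^ε∘π for some family of diffeomorphisms φ_B^ε of the base) and ψ^ε, ψ'^ε are Hamiltonian flows generated by time-dependent Hamiltonian vector fields X_{G_ε}, X_{G'_ε} with zero fiberwise averages ⟨G_ε⟩ = ⟨G'_ε⟩ = 0. Then Φ^ε = Φ'^ε and ψ^ε = ψ'^ε for all ε. -/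

import Mathlib

open MeasureTheory

/-- The standard symplectic form `ω = Σ dθ_j ∧ da_j` on `M = 𝕋^d × ℝ^d`. -/
def stdSymp (d : ℕ) (v w : (Fin d → ℝ) × (Fin d → ℝ)) : ℝ :=
  ∑ j, (v.1 j * w.2 j - w.1 j * v.2 j)

/-- The hypotheses on one decomposition `φ^ε = Φ^ε ∘ ψ^ε` of a family of symplectomorphisms of
`M = 𝕋^d × ℝ^d`: `Φ^ε` is a smooth family of fiber-preserving symplectomorphisms covering a
family `φB^ε` of diffeomorphisms of the base, and `ψ^ε` is the Hamiltonian flow of the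
time-dependent Hamiltonian vector field `XG_ε = -ω^{-1}(dG_ε)` of a family `G_ε` with zero
fiberwise average.  All maps commute with the deck transformations `θ ↦ θ + n`, `n ∈ ℤ^d`,
i.e. they descend to the torus. -/
def IsFlowDecomposition (d : ℕ)
    (φ Φ ψ : ℝ → ((Fin d → ℝ) × (Fin d → ℝ)) → ((Fin d → ℝ) × (Fin d → ℝ)))
    (φB : ℝ → (Fin d → ℝ) → (Fin d → ℝ))
    (G : ℝ → ((Fin d → ℝ) × (Fin d → ℝ)) → ℝ)
    (XG : ℝ → ((Fin d → ℝ) × (Fin d → ℝ)) → ((Fin d → ℝ) × (Fin d → ℝ))) : Prop :=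
  Φ 0 = id ∧ ψ 0 = id ∧
  ContDiff ℝ (⊤ : ℕ∞) (fun q : ℝ × ((Fin d → ℝ) × (Fin d → ℝ)) => Φ q.1 q.2) ∧
  ContDiff ℝ (⊤ : ℕ∞) (fun q : ℝ × ((Fin d → ℝ) × (Fin d → ℝ)) => ψ q.1 q.2) ∧
  ContDiff ℝ (⊤ : ℕ∞) (fun q : ℝ × ((Fin d → ℝ) × (Fin d → ℝ)) => G q.1 q.2) ∧
  (∀ ε : ℝ, Function.Bijective (Φ ε)) ∧ (∀ ε : ℝ, Function.Bijective (ψ ε)) ∧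
  -- equivariance under deck transformations (the maps descend to 𝕋^d × ℝ^d)
  (∀ (ε : ℝ) (θ a : Fin d → ℝ) (n : Fin d → ℤ),
    Φ ε (θ + (fun i => (n i : ℝ)), a) = Φ ε (θ, a) + ((fun i => (n i : ℝ)), 0)) ∧
  (∀ (ε : ℝ) (θ a : Fin d → ℝ) (n : Fin d → ℤ),
    ψ ε (θ + (fun i => (n i : ℝ)), a) = ψ ε (θ, a) + ((fun i => (n i : ℝ)), 0)) ∧
  (∀ (ε : ℝ) (θ a : Fin d → ℝ) (n : Fin d → ℤ),
    G ε (θ + (fun i => (n i : ℝ)), a) = G ε (θ, a)) ∧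
  -- Φ is fiber-preserving and symplectic
  (∀ (ε : ℝ) (p : (Fin d → ℝ) × (Fin d → ℝ)), (Φ ε p).2 = φB ε p.2) ∧
  (∀ (ε : ℝ) (p v w : (Fin d → ℝ) × (Fin d → ℝ)),
    stdSymp d (fderiv ℝ (Φ ε) p v) (fderiv ℝ (Φ ε) p w) = stdSymp d v w) ∧
  -- ψ is the flow of the Hamiltonian vector field XG_ε of G_ε, which has zero fiberwise average
  (∀ (ε : ℝ) (p v : (Fin d → ℝ) × (Fin d → ℝ)),
    stdSymp d (XG ε p) v = - fderiv ℝ (G ε) p v) ∧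
  (∀ (ε : ℝ) (m : (Fin d → ℝ) × (Fin d → ℝ)),
    HasDerivAt (fun e => ψ e m) (XG ε (ψ ε m)) ε) ∧
  (∀ (ε : ℝ) (p : (Fin d → ℝ) × (Fin d → ℝ)),
    (∫ t in Set.Icc (0 : Fin d → ℝ) 1, G ε (p.1 + t, p.2)) = 0) ∧
  -- the decomposition itself
  (∀ (ε : ℝ) (m : (Fin d → ℝ) × (Fin d → ℝ)), φ ε m = Φ ε (ψ ε m))

/-!
Equivariance and symplecticity force the lift of a fiber-preserving symplectomorphism to have
the form `(θ, a) ↦ (θ + c(a), a + b)`, so these maps form a group and preserve the averages over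
fibers. Hence `T^ε = (Φ'^ε)⁻¹ ∘ Φ^ε` is again such an isotopy, and `ψ'^ε = T^ε ∘ ψ^ε`.
Differentiating in `ε` gives `d(G' ∘ T - G) = -ω(∂_ε T, DT ·)`. Since the base component of
`∂_ε T` depends on `a` only, `G' ∘ T - G` is affine along each fiber; being periodic with zero
average it vanishes, so nondegeneracy of `ω` yields `∂_ε T = 0` and `T^ε = id`.
-/

open scoped Matrix

section Periodic

variable {ι E F : Type*} [NormedAddCommGroup E] [NormedSpace ℝ E]
  [NormedAddCommGroup F] [NormedSpace ℝ F]

theorem eq_add_apply_of_hasFDerivAt_const {f : E → F} {L : E →L[ℝ] F}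
    (hf : ∀ x, HasFDerivAt f L x) (x : E) : f x = f 0 + L x := by
  have hg : ∀ x, HasFDerivAt (fun y ↦ f 0 + L y) L x := fun x ↦ L.hasFDerivAt.const_add (f 0)
  exact congrFun (eq_of_fderiv_eq (fun x ↦ (hf x).differentiableAt)
    (fun x ↦ (hg x).differentiableAt) (fun x ↦ (hf x).fderiv.trans (hg x).fderiv.symm) 0
    (by simp)) x

theorem linearMap_ext_int [Finite ι] {R M : Type*} [Ring R] [AddCommGroup M] [Module R M]
    {f g : (ι → R) →ₗ[R] M}
    (h : ∀ n : ι → ℤ, f (fun i ↦ (n i : R)) = g (fun i ↦ (n i : R))) : f = g := by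
  classical
  refine (Pi.basisFun R ι).ext fun i ↦ ?_
  have hcast : (fun j ↦ ((Pi.single i 1 : ι → ℤ) j : R)) = Pi.single i 1 := by
    ext j
    simp [Pi.single_apply]
  simpa [hcast] using h (Pi.single i 1)

theorem clm_eq_zero_of_hasFDerivAt_const_of_periodic [Finite ι] {f : (ι → ℝ) → F}
    {L : (ι → ℝ) →L[ℝ] F}
    (hf : ∀ x, HasFDerivAt f L x) (hper : ∀ n : ι → ℤ, f (fun i ↦ (n i : ℝ)) = f 0) : L = 0 := by
  have := Fintype.ofFinite ι
  refine ContinuousLinearMap.coe_injective (linearMap_ext_int fun n ↦ ?_)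
  simpa [hper] using eq_add_apply_of_hasFDerivAt_const hf (fun i ↦ (n i : ℝ))

theorem eq_zero_of_hasFDerivAt_const_of_integral_eq_zero [Fintype ι] [CompleteSpace F]
    {f : (ι → ℝ) → F} {L : (ι → ℝ) →L[ℝ] F} (hf : ∀ x, HasFDerivAt f L x)
    (hper : ∀ n : ι → ℤ, f (fun i ↦ (n i : ℝ)) = f 0)
    (hmean : ∫ x in Set.Icc (0 : ι → ℝ) 1, f x = 0) : f = 0 := by
  have hconst : ∀ x, f x = f 0 := fun x ↦ by
    simpa [clm_eq_zero_of_hasFDerivAt_const_of_periodic hf hper]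
      using eq_add_apply_of_hasFDerivAt_const hf x
  have hf0 : f 0 = 0 := by
    simpa [hconst, Measure.real, Real.volume_Icc_pi] using hmean
  exact funext fun x ↦ (hconst x).trans hf0

end Periodic

theorem hasDerivAt_family_apply {𝕜 E F : Type*} [NontriviallyNormedField 𝕜]
    [NormedAddCommGroup E] [NormedSpace 𝕜 E] [NormedAddCommGroup F] [NormedSpace 𝕜 F]
    {T : 𝕜 → E → F} {u : 𝕜 → E} {u' : E} {t : 𝕜}
    (hT : DifferentiableAt 𝕜 (fun q : 𝕜 × E ↦ T q.1 q.2) (t, u t)) (hu : HasDerivAt u u' t) :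
    HasDerivAt (fun s ↦ T s (u s)) (deriv (fun s ↦ T s (u t)) t + fderiv 𝕜 (T t) (u t) u') t := by
  set D := fderiv 𝕜 (fun q : 𝕜 × E ↦ T q.1 q.2) (t, u t)
  have htime : HasDerivAt (fun s ↦ T s (u t)) (D (1, 0)) t :=
    hT.hasFDerivAt.comp_hasDerivAt (f := fun s ↦ (s, u t)) t
      ((hasDerivAt_id t).prodMk (hasDerivAt_const t (u t)))
  have hspace : HasFDerivAt (T t) (D.comp (ContinuousLinearMap.inr 𝕜 𝕜 E)) (u t) :=
    hT.hasFDerivAt.comp (u t) (hasFDerivAt_prodMk_right t (u t))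
  have hcurve : HasDerivAt (fun s ↦ T s (u s)) (D (1, u')) t :=
    hT.hasFDerivAt.comp_hasDerivAt (f := fun s ↦ (s, u s)) t ((hasDerivAt_id t).prodMk hu)
  rw [htime.deriv, hspace.fderiv]
  convert hcurve using 1
  simp [← map_add]

/-- The universal cover `ℝ^d × ℝ^d` of `M = 𝕋^d × ℝ^d`; maps and functions on `M` are encoded by
their lifts, which are equivariant, respectively invariant, under `ℤ^d`. -/
abbrev PhaseSpace (d : ℕ) : Type := (Fin d → ℝ) × (Fin d → ℝ)

section SymplecticForm

variable {d : ℕ}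

theorem stdSymp_eq_dotProduct (v w : PhaseSpace d) :
    stdSymp d v w = v.1 ⬝ᵥ w.2 - w.1 ⬝ᵥ v.2 := by
  simp [stdSymp, dotProduct, Finset.sum_sub_distrib]

theorem stdSymp_add_left (u v w : PhaseSpace d) :
    stdSymp d (u + v) w = stdSymp d u w + stdSymp d v w := by
  simp only [stdSymp_eq_dotProduct, Prod.fst_add, Prod.snd_add, add_dotProduct, dotProduct_add]
  ring

theorem eq_zero_of_forall_stdSymp_eq_zero {v : PhaseSpace d} (h : ∀ w, stdSymp d v w = 0) :
    v = 0 := by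
  refine Prod.ext (dotProduct_eq_zero _ fun w ↦ ?_) (dotProduct_eq_zero _ fun w ↦ ?_)
  · simpa [stdSymp_eq_dotProduct] using h (0, w)
  · simpa [stdSymp_eq_dotProduct, dotProduct_comm] using h (w, 0)

/-- `F` preserves the standard symplectic form. It is stated through `fderiv`, hence meaningful
only for differentiable `F`. -/
def IsSymplectic (F : PhaseSpace d → PhaseSpace d) : Prop :=
  ∀ p v w, stdSymp d (fderiv ℝ F p v) (fderiv ℝ F p w) = stdSymp d v w

variable {F K : PhaseSpace d → PhaseSpace d}

theorem IsSymplectic.comp (hF : IsSymplectic F) (hK : IsSymplectic K)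
    (hFd : Differentiable ℝ F) (hKd : Differentiable ℝ K) : IsSymplectic (F ∘ K) := fun p v w ↦ by
  rw [fderiv_comp p (hFd (K p)) (hKd p)]
  exact (hF (K p) _ _).trans (hK p v w)

theorem IsSymplectic.of_comp (hF : IsSymplectic F) (hFK : IsSymplectic (F ∘ K))
    (hFd : Differentiable ℝ F) (hKd : Differentiable ℝ K) : IsSymplectic K := fun p v w ↦ by
  have h := hFK p v w
  rw [fderiv_comp p (hFd (K p)) (hKd p)] at h
  exact (hF (K p) _ _).symm.trans h

theorem isSymplectic_id : IsSymplectic (id : PhaseSpace d → PhaseSpace d) := fun p v w ↦ by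
  simp

end SymplecticForm

section FiberedSymplectic

variable {d : ℕ}

/-- The base coordinate of `F` along the zero section `θ = 0`; when `F` is fiber-preserving, this
is the map of the base `ℝ^d` covered by `F`. -/
def baseMap (F : PhaseSpace d → PhaseSpace d) (a : Fin d → ℝ) : Fin d → ℝ := (F (0, a)).2

/-- The angle coordinate of `F` along the zero section `θ = 0`, that is, the angle by which a
fiber-preserving symplectomorphism `F` rotates the fiber over `a`. -/
def fiberShift (F : PhaseSpace d → PhaseSpace d) (a : Fin d → ℝ) : Fin d → ℝ := (F (0, a)).1

theorem differentiable_baseMap {F : PhaseSpace d → PhaseSpace d} (hF : Differentiable ℝ F) :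
    Differentiable ℝ (baseMap F) := by
  unfold baseMap
  fun_prop

theorem differentiable_fiberShift {F : PhaseSpace d → PhaseSpace d} (hF : Differentiable ℝ F) :
    Differentiable ℝ (fiberShift F) := by
  unfold fiberShift
  fun_prop

/-- Lifts to `ℝ^d × ℝ^d` of fiber-preserving symplectic maps of `𝕋^d × ℝ^d` inducing the identity
on the fundamental groups of the fibers. -/
structure IsFiberedSymplectic (F : PhaseSpace d → PhaseSpace d) : Prop where
  differentiable : Differentiable ℝ F
  equivariant : ∀ (θ a : Fin d → ℝ) (n : Fin d → ℤ),
    F (θ + (fun i ↦ (n i : ℝ)), a) = F (θ, a) + ((fun i ↦ (n i : ℝ)), 0)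
  snd_eq : ∀ p, (F p).2 = baseMap F p.2
  isSymplectic : IsSymplectic F

namespace IsFiberedSymplectic

variable {F K : PhaseSpace d → PhaseSpace d}

theorem snd_fderiv (hF : IsFiberedSymplectic F) (p v : PhaseSpace d) :
    (fderiv ℝ F p v).2 = fderiv ℝ (baseMap F) p.2 v.2 := by
  have hcover : HasFDerivAt (fun q ↦ (F q).2)
      ((fderiv ℝ (baseMap F) p.2).comp (ContinuousLinearMap.snd ℝ _ _)) p := by
    rw [funext hF.snd_eq]
    exact (differentiable_baseMap hF.differentiable p.2).hasFDerivAt.comp p hasFDerivAt_snd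
  exact DFunLike.congr_fun ((hF.differentiable p).hasFDerivAt.snd.unique hcover) v

theorem fderiv_baseMap_dotProduct (hF : IsFiberedSymplectic F) (p : PhaseSpace d)
    (v w : Fin d → ℝ) :
    fderiv ℝ (baseMap F) p.2 w ⬝ᵥ (fderiv ℝ F p (v, 0)).1 = w ⬝ᵥ v := by
  simpa [stdSymp_eq_dotProduct, hF.snd_fderiv, dotProduct_comm]
    using hF.isSymplectic p (v, 0) (0, w)

theorem fderiv_baseMap_dotProduct_fst (hF : IsFiberedSymplectic F) (θ a w : Fin d → ℝ) :
    fderiv ℝ (baseMap F) a w ⬝ᵥ (F (θ, a)).1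
      = fderiv ℝ (baseMap F) a w ⬝ᵥ fiberShift F a + w ⬝ᵥ θ := by
  let pairing : (Fin d → ℝ) → (Fin d → ℝ) →L[ℝ] ℝ := fun x ↦
    LinearMap.toContinuousLinearMap (dotProductEquiv ℝ (Fin d) x)
  have hderiv : ∀ t, HasFDerivAt (fun t ↦ pairing (fderiv ℝ (baseMap F) a w) (F (t, a)).1)
      (pairing w) t := fun t ↦ by
    refine ((pairing _).hasFDerivAt.comp t ((hF.differentiable (t, a)).hasFDerivAt.comp t
      (hasFDerivAt_prodMk_left t a)).fst).congr_fderiv ?_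
    ext1 v
    exact hF.fderiv_baseMap_dotProduct (t, a) v w
  exact eq_add_apply_of_hasFDerivAt_const hderiv θ

theorem fderiv_baseMap (hF : IsFiberedSymplectic F) (a w : Fin d → ℝ) :
    fderiv ℝ (baseMap F) a w = w := by
  refine (dotProductEquiv ℝ (Fin d)).injective (linearMap_ext_int fun n ↦ ?_)
  have h := hF.fderiv_baseMap_dotProduct_fst (fun i ↦ (n i : ℝ)) a w
  have hn := hF.equivariant 0 a n
  rw [zero_add] at hn
  rw [hn, Prod.fst_add, dotProduct_add] at h
  exact add_left_cancel h

theorem apply_eq (hF : IsFiberedSymplectic F) (p : PhaseSpace d) :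
    F p = (p.1 + fiberShift F p.2, p.2 + baseMap F 0) := by
  refine Prod.ext (dotProduct_eq _ _ fun w ↦ ?_) ?_
  · have h := hF.fderiv_baseMap_dotProduct_fst p.1 p.2 w
    rw [hF.fderiv_baseMap, ← dotProduct_add, add_comm] at h
    simpa only [dotProduct_comm w] using h
  · have hderiv : ∀ a, HasFDerivAt (baseMap F) (ContinuousLinearMap.id ℝ _) a := fun a ↦
      (differentiable_baseMap hF.differentiable a).hasFDerivAt.congr_fderiv
        (ContinuousLinearMap.ext (hF.fderiv_baseMap a))
    rw [hF.snd_eq, eq_add_apply_of_hasFDerivAt_const hderiv, add_comm]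
    rfl

theorem fderiv_apply (hF : IsFiberedSymplectic F) (p v : PhaseSpace d) :
    fderiv ℝ F p v = (v.1 + fderiv ℝ (fiberShift F) p.2 v.2, v.2) := by
  have hshift : HasFDerivAt (fun q : PhaseSpace d ↦ fiberShift F q.2) _ p :=
    (differentiable_fiberShift hF.differentiable p.2).hasFDerivAt.comp p hasFDerivAt_snd
  have hderiv := (hasFDerivAt_fst.add hshift).prodMk
    ((hasFDerivAt_snd (𝕜 := ℝ) (p := p)).add_const (baseMap F 0))
  rw [(hderiv.congr_of_eventuallyEq (.of_forall hF.apply_eq)).fderiv]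
  rfl

theorem surjective_fderiv (hF : IsFiberedSymplectic F) (p : PhaseSpace d) :
    Function.Surjective (fderiv ℝ F p) := fun w ↦
  ⟨(w.1 - fderiv ℝ (fiberShift F) p.2 w.2, w.2), by simp [hF.fderiv_apply]⟩

theorem comp (hF : IsFiberedSymplectic F) (hK : IsFiberedSymplectic K) :
    IsFiberedSymplectic (F ∘ K) where
  differentiable := hF.differentiable.comp hK.differentiable
  equivariant θ a n := by
    simp only [Function.comp_apply, hK.equivariant]
    simpa [Prod.add_def] using hF.equivariant (K (θ, a)).1 (K (θ, a)).2 n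
  snd_eq p := by
    simp only [baseMap, Function.comp_apply, hF.snd_eq (K _), hK.snd_eq p]
  isSymplectic := hF.isSymplectic.comp hK.isSymplectic hF.differentiable hK.differentiable

end IsFiberedSymplectic

/-- The inverse of a fiber-preserving symplectomorphism, read off from its normal form
`IsFiberedSymplectic.apply_eq`. -/
def fiberInverse (F : PhaseSpace d → PhaseSpace d) (p : PhaseSpace d) : PhaseSpace d :=
  (p.1 - fiberShift F (p.2 - baseMap F 0), p.2 - baseMap F 0)

namespace IsFiberedSymplectic

variable {F K : PhaseSpace d → PhaseSpace d}

theorem leftInverse_fiberInverse (hF : IsFiberedSymplectic F) :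
    Function.LeftInverse (fiberInverse F) F := fun p ↦ by
  simp [fiberInverse, hF.apply_eq p]

theorem rightInverse_fiberInverse (hF : IsFiberedSymplectic F) :
    Function.RightInverse (fiberInverse F) F := fun p ↦ by
  simp [fiberInverse, hF.apply_eq (_, _)]

protected theorem fiberInverse (hF : IsFiberedSymplectic F) :
    IsFiberedSymplectic (fiberInverse F) := by
  have hdiff : Differentiable ℝ (fiberInverse F) := by
    have := differentiable_fiberShift hF.differentiable
    unfold fiberInverse
    fun_prop
  refine ⟨hdiff, fun θ a n ↦ ?_, fun p ↦ rfl, hF.isSymplectic.of_comp ?_ hF.differentiable hdiff⟩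
  · ext i <;> simp [fiberInverse]
    ring
  · rw [hF.rightInverse_fiberInverse.comp_eq_id]
    exact isSymplectic_id

end IsFiberedSymplectic

/-- A differentiable isotopy, starting at the identity, through fiber-preserving
symplectomorphisms. -/
structure IsFiberedSymplecticIsotopy (T : ℝ → PhaseSpace d → PhaseSpace d) : Prop where
  zero : T 0 = id
  differentiable : Differentiable ℝ (fun q : ℝ × PhaseSpace d ↦ T q.1 q.2)
  fibered : ∀ ε, IsFiberedSymplectic (T ε)

namespace IsFiberedSymplecticIsotopy

variable {T S : ℝ → PhaseSpace d → PhaseSpace d}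

theorem differentiable_apply (hT : IsFiberedSymplecticIsotopy T) (p : PhaseSpace d) :
    Differentiable ℝ (fun ε ↦ T ε p) :=
  hT.differentiable.comp (differentiable_id.prodMk (differentiable_const p))

theorem comp (hT : IsFiberedSymplecticIsotopy T) (hS : IsFiberedSymplecticIsotopy S) :
    IsFiberedSymplecticIsotopy (fun ε ↦ T ε ∘ S ε) where
  zero := by simp [hT.zero, hS.zero]
  differentiable := hT.differentiable.comp (differentiable_fst.prodMk hS.differentiable)
  fibered ε := (hT.fibered ε).comp (hS.fibered ε)

protected theorem fiberInverse (hT : IsFiberedSymplecticIsotopy T) :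
    IsFiberedSymplecticIsotopy (fun ε ↦ fiberInverse (T ε)) where
  zero := by
    ext p <;> simp [fiberInverse, fiberShift, baseMap, hT.zero]
  differentiable := by
    have hbase : Differentiable ℝ (fun q : ℝ × PhaseSpace d ↦ baseMap (T q.1) 0) :=
      (hT.differentiable.comp (differentiable_fst.prodMk (differentiable_const 0))).snd
    have hshift : Differentiable ℝ (fun q : ℝ × (Fin d → ℝ) ↦ fiberShift (T q.1) q.2) :=
      (hT.differentiable.comp (differentiable_fst.prodMk
        ((differentiable_const 0).prodMk differentiable_snd))).fst
    have hsnd := differentiable_snd.snd.sub hbase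
    exact (differentiable_snd.fst.sub (hshift.comp (differentiable_fst.prodMk hsnd))).prodMk hsnd
  fibered ε := (hT.fibered ε).fiberInverse

end IsFiberedSymplecticIsotopy

end FiberedSymplectic

section Hamiltonian

variable {d : ℕ}

/-- Lifts of differentiable functions on `𝕋^d × ℝ^d` whose fiberwise average `⟨G⟩` vanishes. -/
structure IsFiberwiseZeroMean (G : PhaseSpace d → ℝ) : Prop where
  differentiable : Differentiable ℝ G
  periodic : ∀ (θ a : Fin d → ℝ) (n : Fin d → ℤ), G (θ + (fun i ↦ (n i : ℝ)), a) = G (θ, a)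
  average_eq_zero : ∀ p : PhaseSpace d,
    ∫ t in Set.Icc (0 : Fin d → ℝ) 1, G (p.1 + t, p.2) = 0

/-- `X` is the Hamiltonian vector field `-ω⁻¹(dG)` of `G`. -/
def IsHamiltonianField (G : PhaseSpace d → ℝ) (X : PhaseSpace d → PhaseSpace d) : Prop :=
  ∀ p v, stdSymp d (X p) v = -fderiv ℝ G p v

/-- The curves `ε ↦ ψ ε m` are integral curves of the time-dependent Hamiltonian vector field
`X ε` of the function `G ε` of zero fiberwise average. The index `m` stands for an initial
point, but may range over any type. -/
structure IsZeroMeanHamiltonianFlow {α : Type*} (ψ : ℝ → α → PhaseSpace d)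
    (G : ℝ → PhaseSpace d → ℝ) (X : ℝ → PhaseSpace d → PhaseSpace d) : Prop where
  zeroMean : ∀ ε, IsFiberwiseZeroMean (G ε)
  hamiltonian : ∀ ε, IsHamiltonianField (G ε) (X ε)
  hasDerivAt : ∀ ε m, HasDerivAt (fun e ↦ ψ e m) (X ε (ψ ε m)) ε

variable {F X X' Y : PhaseSpace d → PhaseSpace d} {G G' : PhaseSpace d → ℝ}

namespace IsFiberwiseZeroMean

theorem integrableOn_fiber (hG : IsFiberwiseZeroMean G) (p : PhaseSpace d) :
    IntegrableOn (fun t ↦ G (p.1 + t, p.2)) (Set.Icc 0 1) := by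
  have := hG.differentiable.continuous
  exact Continuous.integrableOn_Icc (by fun_prop)

theorem sub (hG : IsFiberwiseZeroMean G) (hG' : IsFiberwiseZeroMean G') :
    IsFiberwiseZeroMean (G - G') where
  differentiable := hG.differentiable.sub hG'.differentiable
  periodic θ a n := by simp [hG.periodic, hG'.periodic]
  average_eq_zero p := by
    simp only [Pi.sub_apply]
    rw [integral_sub (hG.integrableOn_fiber p) (hG'.integrableOn_fiber p),
      hG.average_eq_zero, hG'.average_eq_zero, sub_zero]

theorem comp_isFiberedSymplectic (hG : IsFiberwiseZeroMean G) (hF : IsFiberedSymplectic F) :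
    IsFiberwiseZeroMean (G ∘ F) where
  differentiable := hG.differentiable.comp hF.differentiable
  periodic θ a n := by
    simpa [hF.equivariant, Prod.add_def] using hG.periodic (F (θ, a)).1 (F (θ, a)).2 n
  average_eq_zero p := by
    simpa [hF.apply_eq (_, _), add_right_comm]
      using hG.average_eq_zero (p.1 + fiberShift F p.2, p.2 + baseMap F 0)

theorem eq_zero_of_fderiv_vertical_const (hG : IsFiberwiseZeroMean G)
    (hvert : ∀ θ a u, fderiv ℝ G (θ, a) (u, 0) = fderiv ℝ G (0, a) (u, 0)) : G = 0 := by
  ext ⟨θ, a⟩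
  have hderiv : ∀ t, HasFDerivAt (fun t ↦ G (t, a))
      ((fderiv ℝ G (0, a)).comp (ContinuousLinearMap.inl ℝ _ _)) t := fun t ↦ by
    refine ((hG.differentiable (t, a)).hasFDerivAt.comp t
      (hasFDerivAt_prodMk_left t a)).congr_fderiv ?_
    ext1 u
    exact hvert t a u
  exact congrFun (eq_zero_of_hasFDerivAt_const_of_integral_eq_zero hderiv
    (fun n ↦ by simpa using hG.periodic 0 a n) (by simpa using hG.average_eq_zero (0, a))) θ

end IsFiberwiseZeroMean

theorem fderiv_comp_sub_of_isHamiltonianField (hF : IsSymplectic F)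
    (hFd : Differentiable ℝ F) (hG : Differentiable ℝ G) (hG' : Differentiable ℝ G')
    (hX : IsHamiltonianField G X) (hX' : IsHamiltonianField G' X')
    (hY : ∀ p, X' (F p) = Y p + fderiv ℝ F p (X p)) (p v : PhaseSpace d) :
    fderiv ℝ (G' ∘ F - G) p v = -stdSymp d (Y p) (fderiv ℝ F p v) := by
  have hX'F := hX' (F p) (fderiv ℝ F p v)
  rw [hY, stdSymp_add_left, hF, hX] at hX'F
  rw [fderiv_sub ((hG' _).comp p (hFd p)) (hG p), fderiv_comp p (hG' _) (hFd p)]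
  simp only [sub_apply, ContinuousLinearMap.comp_apply]
  linarith

-- `Y` stands for the velocity of an isotopy carrying the flow of `X` to that of `X'`.
theorem eq_zero_of_isHamiltonianField_pushforward_add (hF : IsFiberedSymplectic F)
    (hG : IsFiberwiseZeroMean G) (hG' : IsFiberwiseZeroMean G')
    (hX : IsHamiltonianField G X) (hX' : IsHamiltonianField G' X')
    (hY : ∀ p, X' (F p) = Y p + fderiv ℝ F p (X p))
    (hbase : ∀ θ a, (Y (θ, a)).2 = (Y (0, a)).2) (p : PhaseSpace d) : Y p = 0 := by
  have hderiv := fderiv_comp_sub_of_isHamiltonianField hF.isSymplectic hF.differentiable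
    hG.differentiable hG'.differentiable hX hX' hY
  have hzero : G' ∘ F - G = 0 := by
    have hmean := (hG'.comp_isFiberedSymplectic hF).sub hG
    refine hmean.eq_zero_of_fderiv_vertical_const fun θ a u ↦ ?_
    simp [hderiv, hF.fderiv_apply, stdSymp_eq_dotProduct, hbase θ a]
  refine eq_zero_of_forall_stdSymp_eq_zero fun w ↦ ?_
  obtain ⟨v, rfl⟩ := hF.surjective_fderiv p w
  simpa [hzero] using hderiv p v

end Hamiltonian

section Uniqueness

variable {d : ℕ} {α : Type*} {ψ ψ' : ℝ → α → PhaseSpace d}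
  {Φ Φ' T X X' : ℝ → PhaseSpace d → PhaseSpace d} {G G' : ℝ → PhaseSpace d → ℝ}

theorem IsFiberedSymplecticIsotopy.deriv_eq_zero (hT : IsFiberedSymplecticIsotopy T)
    (hψ : IsZeroMeanHamiltonianFlow ψ G X) (hψ' : IsZeroMeanHamiltonianFlow ψ' G' X')
    (hTψ : ∀ ε m, T ε (ψ ε m) = ψ' ε m) {ε : ℝ} (hsurj : Function.Surjective (ψ ε))
    (p : PhaseSpace d) : deriv (fun e ↦ T e p) ε = 0 := by
  have hsnd : ∀ p, HasDerivAt (fun e ↦ (T e p).2) (deriv (fun e ↦ T e p) ε).2 ε := fun p ↦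
    (hT.differentiable_apply p ε).hasDerivAt.snd
  refine eq_zero_of_isHamiltonianField_pushforward_add (hT.fibered ε) (hψ.zeroMean ε)
    (hψ'.zeroMean ε) (hψ.hamiltonian ε) (hψ'.hamiltonian ε) (Y := fun p ↦ deriv (fun e ↦ T e p) ε)
    (fun p ↦ ?_) (fun θ a ↦ ?_) p
  · obtain ⟨m, rfl⟩ := hsurj p
    have hflow := hasDerivAt_family_apply (hT.differentiable (ε, ψ ε m)) (hψ.hasDerivAt ε m)
    simp only [hTψ _ m] at hflow
    rw [hTψ, (hψ'.hasDerivAt ε m).unique hflow]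
  · exact (hsnd (θ, a)).unique ((hsnd (0, a)).congr_of_eventuallyEq
      (.of_forall fun e ↦ (hT.fibered e).snd_eq (θ, a)))

theorem IsFiberedSymplecticIsotopy.eq_id (hT : IsFiberedSymplecticIsotopy T)
    (hψ : IsZeroMeanHamiltonianFlow ψ G X) (hψ' : IsZeroMeanHamiltonianFlow ψ' G' X')
    (hTψ : ∀ ε m, T ε (ψ ε m) = ψ' ε m) (hsurj : ∀ ε, Function.Surjective (ψ ε)) (ε : ℝ) :
    T ε = id := by
  ext1 p
  rw [is_const_of_deriv_eq_zero (hT.differentiable_apply p)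
    (fun e ↦ hT.deriv_eq_zero hψ hψ' hTψ (hsurj e) p) ε 0, hT.zero]

theorem uniqueness_of_flow_decomposition_general (hΦ : IsFiberedSymplecticIsotopy Φ)
    (hΦ' : IsFiberedSymplecticIsotopy Φ') (hψ : IsZeroMeanHamiltonianFlow ψ G X)
    (hψ' : IsZeroMeanHamiltonianFlow ψ' G' X') (hsurj : ∀ ε, Function.Surjective (ψ ε))
    (hdec : ∀ ε m, Φ ε (ψ ε m) = Φ' ε (ψ' ε m)) (ε : ℝ) : Φ ε = Φ' ε ∧ ψ ε = ψ' ε := by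
  have htransition : ∀ ε m, fiberInverse (Φ' ε) (Φ ε (ψ ε m)) = ψ' ε m := fun ε m ↦ by
    rw [hdec, (hΦ'.fibered ε).leftInverse_fiberInverse]
  have hid : fiberInverse (Φ' ε) ∘ Φ ε = id :=
    (hΦ'.fiberInverse.comp hΦ).eq_id hψ hψ' htransition hsurj ε
  refine ⟨funext fun p ↦ ?_, funext fun m ↦ ?_⟩
  · rw [← (hΦ'.fibered ε).rightInverse_fiberInverse (Φ ε p)]
    exact congrArg (Φ' ε) (congrFun hid p)
  · exact (congrFun hid (ψ ε m)).symm.trans (htransition ε m)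

end Uniqueness

namespace IsFlowDecomposition

variable {d : ℕ} {φ Φ ψ : ℝ → PhaseSpace d → PhaseSpace d} {φB : ℝ → (Fin d → ℝ) → Fin d → ℝ}
  {G : ℝ → PhaseSpace d → ℝ} {X : ℝ → PhaseSpace d → PhaseSpace d}

theorem isFiberedSymplecticIsotopy (h : IsFlowDecomposition d φ Φ ψ φB G X) :
    IsFiberedSymplecticIsotopy Φ := by
  obtain ⟨hΦ0, -, hΦ, -, -, -, -, hequiv, -, -, hfib, hsymp, -⟩ := h
  have hdiff : Differentiable ℝ (fun q : ℝ × PhaseSpace d ↦ Φ q.1 q.2) :=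
    hΦ.differentiable (by simp)
  refine ⟨hΦ0, hdiff, fun ε ↦ ⟨?_, hequiv ε, fun p ↦ ?_, hsymp ε⟩⟩
  · exact hdiff.comp ((differentiable_const ε).prodMk differentiable_id)
  · rw [baseMap, hfib, hfib]

theorem isZeroMeanHamiltonianFlow (h : IsFlowDecomposition d φ Φ ψ φB G X) :
    IsZeroMeanHamiltonianFlow ψ G X := by
  obtain ⟨-, -, -, -, hG, -, -, -, -, hper, -, -, hX, hflow, havg, -⟩ := h
  have hdiff : Differentiable ℝ (fun q : ℝ × PhaseSpace d ↦ G q.1 q.2) :=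
    hG.differentiable (by simp)
  refine ⟨fun ε ↦ ⟨?_, hper ε, havg ε⟩, hX, hflow⟩
  exact hdiff.comp ((differentiable_const ε).prodMk differentiable_id)

theorem surjective_flow (h : IsFlowDecomposition d φ Φ ψ φB G X) (ε : ℝ) :
    Function.Surjective (ψ ε) := by
  obtain ⟨-, -, -, -, -, -, hψ, -⟩ := h
  exact (hψ ε).2

theorem apply_eq (h : IsFlowDecomposition d φ Φ ψ φB G X) (ε : ℝ) (m : PhaseSpace d) :
    φ ε m = Φ ε (ψ ε m) := by
  obtain ⟨-, -, -, -, -, -, -, -, -, -, -, -, -, -, -, hdec⟩ := h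
  exact hdec ε m

end IsFlowDecomposition

/-- On `M = 𝕋^d × ℝ^d` with `ω = Σ dθ_j ∧ da_j`, the decomposition of a smooth
family of symplectomorphisms `φ^ε` (with `φ^0 = id`) as `φ^ε = Φ^ε ∘ ψ^ε`, with `Φ^ε`
fiber-preserving symplectomorphisms and `ψ^ε` a Hamiltonian flow generated by Hamiltonians of
zero fiberwise average, is unique: two such decompositions coincide. -/
theorem uniqueness_of_flow_decomposition
    (d : ℕ)
    (φ Φ Φ' ψ ψ' : ℝ → ((Fin d → ℝ) × (Fin d → ℝ)) → ((Fin d → ℝ) × (Fin d → ℝ)))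
    (φB φB' : ℝ → (Fin d → ℝ) → (Fin d → ℝ))
    (G G' : ℝ → ((Fin d → ℝ) × (Fin d → ℝ)) → ℝ)
    (XG XG' : ℝ → ((Fin d → ℝ) × (Fin d → ℝ)) → ((Fin d → ℝ) × (Fin d → ℝ)))
    (hφ0 : φ 0 = id)
    (h : IsFlowDecomposition d φ Φ ψ φB G XG)
    (h' : IsFlowDecomposition d φ Φ' ψ' φB' G' XG') :
    ∀ ε : ℝ, Φ ε = Φ' ε ∧ ψ ε = ψ' ε :=
  uniqueness_of_flow_decomposition_general h.isFiberedSymplecticIsotopy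
    h'.isFiberedSymplecticIsotopy h.isZeroMeanHamiltonianFlow h'.isZeroMeanHamiltonianFlow
    h.surjective_flow fun ε m ↦ (h.apply_eq ε m).symm.trans (h'.apply_eq ε m)
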